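/- arXiv:1208.1788 — 4 statements merged into one kernel-verified Lean document; each statement's English description precedes it below -/
import Mathlib

section
/- There do not exist functions φ : ℕ^ℕ → [ω]^ω and ψ : [ω]^ω → ℕ^ℕ such that for every f ∈ ℕ^ℕ and every A ∈ [ω]^ω: if f(n) ≥ ψ(A)(n) for all but finitely many n, then φ(f) ∖ A is finite. (This shows that for every class 𝒞 of filters on ℕ, there is no Tukey morphism, Borel or otherwise, from the cardinal 𝔭_𝒞 to the bounding number 𝔟.) -/
/-!
Any two functions have a common `≥*`-bound `f`. If `A` and `B` are disjoint infinite sets and `f`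
bounds `ψ A` and `ψ B`, then `φ f ⊆* A` and `φ f ⊆* B`, so the infinite set `φ f` would be almost
contained in `A ∩ B = ∅`.
-/

open Filter

/-- `[ω]^ω`: the infinite subsets of ℕ. -/
abbrev InfSubset := {A : Set ℕ // A.Infinite}

section TukeyMorphism

variable {α β γ δ : Type*} {R : α → β → Prop} {S : γ → δ → Prop} {ψ : α → γ} {φ : δ → β}

/-- A Tukey morphism from the relation `R` to the relation `S`, where `R a b` means that the
response `b` meets the challenge `a`: challenges are sent from `R` to `S` by `ψ`, and responses
back from `S` to `R` by `φ`. -/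
def IsTukeyMorphism (R : α → β → Prop) (S : γ → δ → Prop) (ψ : α → γ) (φ : δ → β) : Prop :=
  ∀ a d, S (ψ a) d → R a (φ d)

/-- Any two challenges of the relation `R` are met by a common response. This is the directedness
of `R`, for a relation whose challenges and responses may have different types. -/
def HasCommonResponses (R : α → β → Prop) : Prop :=
  ∀ a₁ a₂, ∃ b, R a₁ b ∧ R a₂ b

theorem HasCommonResponses.of_isTukeyMorphism (hS : HasCommonResponses S)
    (h : IsTukeyMorphism R S ψ φ) : HasCommonResponses R := fun a₁ a₂ =>
  let ⟨d, h₁, h₂⟩ := hS (ψ a₁) (ψ a₂)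
  ⟨φ d, h a₁ d h₁, h a₂ d h₂⟩

end TukeyMorphism

theorem hasCommonResponses_eventuallyLE {ι β : Type*} [Preorder β] [IsDirectedOrder β]
    (l : Filter ι) : HasCommonResponses fun g f : ι → β => g ≤ᶠ[l] f := by
  intro g₁ g₂
  choose f h₁ h₂ using fun i => exists_ge_ge (g₁ i) (g₂ i)
  exact ⟨f, .of_forall h₁, .of_forall h₂⟩

theorem finite_of_finite_sdiff_of_disjoint {ι : Type*} {s t u : Set ι} (hst : Disjoint s t)
    (hs : (u \ s).Finite) (ht : (u \ t).Finite) : u.Finite := by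
  have hu : u \ s ∪ u \ t = u := by
    rw [← Set.sdiff_inter, hst.inter_eq, Set.sdiff_empty]
  exact hu ▸ hs.union ht

theorem exists_disjoint_infinite_infinite (ι : Type*) [Infinite ι] :
    ∃ s t : Set ι, Disjoint s t ∧ s.Infinite ∧ t.Infinite := by
  obtain ⟨e⟩ : Nonempty (ι ⊕ ι ≃ ι) := by
    rw [← Cardinal.eq, Cardinal.mk_sum, Cardinal.lift_id, Cardinal.add_mk_eq_self]
  refine ⟨Set.range (e ∘ Sum.inl), Set.range (e ∘ Sum.inr), ?_,
    Set.infinite_range_of_injective (e.injective.comp Sum.inl_injective),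
    Set.infinite_range_of_injective (e.injective.comp Sum.inr_injective)⟩
  simp only [Set.range_comp]
  exact (Set.disjoint_image_iff e.injective).2 Set.isCompl_range_inl_range_inr.disjoint

theorem not_hasCommonResponses_almostSubset {ι : Type*} [Infinite ι] :
    ¬ HasCommonResponses fun A B : {A : Set ι // A.Infinite} => (B.1 \ A.1).Finite := by
  intro h
  obtain ⟨s, t, hst, hs, ht⟩ := exists_disjoint_infinite_infinite ι
  obtain ⟨B, hBs, hBt⟩ := h ⟨s, hs⟩ ⟨t, ht⟩
  exact B.2 (finite_of_finite_sdiff_of_disjoint hst hBs hBt)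

theorem stmt1_general {ι γ δ : Type*} [Infinite ι] {S : γ → δ → Prop}
    (hS : HasCommonResponses S) :
    ¬ ∃ (φ : δ → {A : Set ι // A.Infinite}) (ψ : {A : Set ι // A.Infinite} → γ),
      IsTukeyMorphism (fun A B => (B.1 \ A.1).Finite) S ψ φ :=
  fun ⟨_, _, h⟩ => not_hasCommonResponses_almostSubset (hS.of_isTukeyMorphism h)

/-- There are no maps `φ : ℕ^ℕ → [ω]^ω` and `ψ : [ω]^ω → ℕ^ℕ` such that
whenever `f ≥* ψ(A)` we have `φ(f) ⊆* A`.  (Hence for any class 𝒞 of filters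
there is no Tukey morphism from 𝔭_𝒞 to 𝔟.) -/
theorem stmt1 :
    ¬ ∃ (φ : (ℕ → ℕ) → InfSubset) (ψ : InfSubset → (ℕ → ℕ)),
      ∀ (f : ℕ → ℕ) (A : InfSubset),
        (∀ᶠ n in cofinite, ψ A n ≤ f n) → ((φ f).1 \ A.1).Finite :=
  fun ⟨φ, ψ, h⟩ => stmt1_general (hasCommonResponses_eventuallyLE cofinite)
    ⟨φ, ψ, fun A f => h f A⟩
end

section
/- For every n ≥ 1 there exists a continuous function ψ_n : X_n → [ω]^ω, where X_n = {f ∈ ℕ^ℕ : f(k) ≤ 1 for all k ≥ n} with the subspace topology from ℕ^ℕ, such that: (i) for any f_1, …, f_n ∈ X_n, the intersection ψ_n(f_1) ∩ ⋯ ∩ ψ_n(f_n) is infinite; (ii) for any pairwise distinct f_1, …, f_{n+1} ∈ X_n, the intersection ψ_n(f_1) ∩ ⋯ ∩ ψ_n(f_{n+1}) is finite; and (iii) if f_1, …, f_{n+1} ∈ X_n have pairwise distinct restrictions to {0, 1, …, n−1}, then ψ_n(f_1) ∩ ⋯ ∩ ψ_n(f_{n+1}) = ∅. -/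
/-- The subset of ℕ coded by an element of Cantor space. -/
def bset (x : ℕ → Bool) : Set ℕ := {n | x n = true}

/-- `[ω]^ω`, regarded as a subspace of Cantor space via characteristic functions. -/
abbrev InfC := {x : ℕ → Bool // (bset x).Infinite}

/-- `[T_n]`, the branches of the tree that is ω-branching for the first `n`
levels and binary branching afterwards, as a subspace of Baire space. -/
abbrev TreeSpace (n : ℕ) := {f : ℕ → ℕ // ∀ k, n ≤ k → f k ≤ 1}

/-!
Approximate each `f` at level `m` by a point of a finite set, and let a code of level `m` be a
list of `n` such points; `ψ f` is the set of codes listing the level-`m` approximation of `f`.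
Any `n` functions share a code at every high level, namely the list of their own approximations.
By pigeonhole, a code shared by `n + 1` functions gives two of them the same approximation; for
distinct functions this happens at only finitely many levels, each of which has finitely many codes.

On all of Baire space, the first `m` values cut off at `m` serve as approximations. The cut-off can
identify functions that differ below `d`, so `f` enters only at the levels that leave its first `d`
values intact; there a shared approximation means agreement below `d`.
-/

open Filter

section CapturingCodes

variable {X : Type*} {Q : ℕ → Type*}

/-- A code `⟨m, s⟩` is a level `m` with a list `s`, indexed by `ι`, of approximations in `Q m`.
It captures a point `x` if `x` is active at level `m`, that is `x ∈ V m`, and its approximation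
`r m x` is listed by `s`. -/
def capturingCodes (ι : Type*) (V : ℕ → Set X) (r : ∀ m, X → Q m) (x : X) :
    Set (Σ m, ι → Q m) :=
  {p | x ∈ V p.1 ∧ r p.1 x ∈ Set.range p.2}

variable {ι κ : Type*} {V : ℕ → Set X} {r : ∀ m, X → Q m}

lemma infinite_iInter_capturingCodes [Finite ι] {g : ι → X}
    (hV : ∀ i, ∀ᶠ m in atTop, g i ∈ V m) : (⋂ i, capturingCodes ι V r (g i)).Infinite := by
  let code (m : ℕ) : Σ m, ι → Q m := ⟨m, fun i => r m (g i)⟩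
  have code_injective : code.Injective := fun _ _ h => congrArg Sigma.fst h
  have all_active : {m | ∀ i, g i ∈ V m}.Infinite :=
    Nat.frequently_atTop_iff_infinite.1 (eventually_all.2 hV).frequently
  refine (all_active.image code_injective.injOn).mono ?_
  rintro _ ⟨m, hm, rfl⟩
  exact Set.mem_iInter.2 fun i => ⟨hm i, i, rfl⟩

lemma exists_ne_approx_eq_of_mem_iInter_capturingCodes [Fintype ι] [Fintype κ]
    (hcard : Fintype.card ι < Fintype.card κ) {g : κ → X} {p : Σ m, ι → Q m}
    (hp : p ∈ ⋂ a, capturingCodes ι V r (g a)) :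
    ∃ a b, a ≠ b ∧ r p.1 (g a) = r p.1 (g b) := by
  choose c hc using fun a => (Set.mem_iInter.1 hp a).2
  obtain ⟨a, b, hab, hcab⟩ := Fintype.exists_ne_map_eq_of_card_lt c hcard
  exact ⟨a, b, hab, by rw [← hc a, ← hc b, hcab]⟩

lemma finite_iInter_capturingCodes [∀ m, Finite (Q m)] [Fintype ι] [Fintype κ]
    (hcard : Fintype.card ι < Fintype.card κ) {g : κ → X}
    (hg : ∀ a b, a ≠ b → ∀ᶠ m in atTop, r m (g a) ≠ r m (g b)) :
    (⋂ a, capturingCodes ι V r (g a)).Finite := by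
  obtain ⟨N, hN⟩ : ∃ N, ∀ m ≥ N, ∀ a b, a ≠ b → r m (g a) ≠ r m (g b) :=
    eventually_atTop.1 <| by simpa only [eventually_all] using hg
  have finite_below : {p : Σ m, ι → Q m | p.1 < N}.Finite :=
    (Set.finite_Iio N).preimage' fun m _ => Set.range_sigmaMk m ▸ Set.finite_range _
  refine finite_below.subset fun p hp => ?_
  obtain ⟨a, b, hab, heq⟩ := exists_ne_approx_eq_of_mem_iInter_capturingCodes hcard hp
  exact not_le.1 fun hNp => hN p.1 hNp a b hab heq

lemma isClopen_setOf_mem_capturingCodes [TopologicalSpace X] (hV : ∀ m, IsClopen (V m))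
    (hr : ∀ m, IsLocallyConstant (r m)) (p : Σ m, ι → Q m) :
    IsClopen {x | p ∈ capturingCodes ι V r x} :=
  (hV p.1).inter ⟨⟨hr p.1 (Set.range p.2)ᶜ⟩, hr p.1 (Set.range p.2)⟩

end CapturingCodes

lemma bset_boolIndicator (s : Set ℕ) : bset s.boolIndicator = s :=
  s.preimage_boolIndicator_true

lemma exists_continuous_bset_eq_image {X α : Type*} [TopologicalSpace X] [Countable α]
    {A : X → Set α} (hinf : ∀ x, (A x).Infinite) (hA : ∀ p, IsClopen {x | p ∈ A x}) :
    ∃ (e : α → ℕ) (ψ : X → InfC),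
      e.Injective ∧ Continuous ψ ∧ ∀ x, bset (ψ x).1 = e '' A x := by
  obtain ⟨e, he⟩ := exists_injective_nat α
  have isClopen_image (j : ℕ) : IsClopen {x | j ∈ e '' A x} := by
    by_cases hj : j ∈ Set.range e
    · obtain ⟨p, rfl⟩ := hj
      simpa only [he.mem_set_image] using hA p
    · convert! isClopen_empty (X := X)
      exact Set.eq_empty_of_forall_notMem fun x hx => hj (Set.image_subset_range e _ hx)
  have continuous_indicator : Continuous fun x => (e '' A x).boolIndicator :=
    continuous_pi fun j => (continuous_boolIndicator_iff_isClopen _).2 (isClopen_image j)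
  have infinite_bset (x : X) : (bset (e '' A x).boolIndicator).Infinite := by
    rw [bset_boolIndicator]
    exact (hinf x).image he.injOn
  exact ⟨e, fun x => ⟨_, infinite_bset x⟩, he, continuous_indicator.subtype_mk _,
    fun _ => bset_boolIndicator _⟩

/-- The finite approximation of `f` at level `m`: its first `m` values, cut off at `m`. -/
def truncate (m : ℕ) (f : ℕ → ℕ) : Fin m → Fin (m + 1) :=
  fun k => ⟨min (f k) m, Nat.lt_succ_of_le (min_le_right _ _)⟩

/-- The functions whose first `d` values are left intact by `truncate m`. -/
def intactBelow (d m : ℕ) : Set (ℕ → ℕ) :=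
  {f | ∀ k < d, k < m ∧ f k ≤ m}

lemma min_eq_min_of_truncate_eq {m k : ℕ} {f g : ℕ → ℕ} (h : truncate m f = truncate m g)
    (hk : k < m) : min (f k) m = min (g k) m :=
  congrArg Fin.val (congrFun h ⟨k, hk⟩)

lemma eventually_truncate_ne {f g : ℕ → ℕ} (hfg : f ≠ g) :
    ∀ᶠ m in atTop, truncate m f ≠ truncate m g := by
  obtain ⟨k, hk⟩ := Function.ne_iff.1 hfg
  filter_upwards [eventually_gt_atTop k, eventually_ge_atTop (f k), eventually_ge_atTop (g k)]
    with m hkm hfm hgm h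
  have := min_eq_min_of_truncate_eq h hkm
  rw [min_eq_left hfm, min_eq_left hgm] at this
  exact hk this

lemma eq_of_truncate_eq_of_mem_intactBelow {d m k : ℕ} {f g : ℕ → ℕ}
    (h : truncate m f = truncate m g) (hf : f ∈ intactBelow d m) (hg : g ∈ intactBelow d m)
    (hk : k < d) : f k = g k := by
  have := min_eq_min_of_truncate_eq h (hf k hk).1
  rwa [min_eq_left (hf k hk).2, min_eq_left (hg k hk).2] at this

lemma eventually_mem_intactBelow (d : ℕ) (f : ℕ → ℕ) :
    ∀ᶠ m in atTop, f ∈ intactBelow d m :=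
  (Set.finite_Iio d).eventually_all.2 fun k _ =>
    (eventually_gt_atTop k).and (eventually_ge_atTop (f k))

lemma isLocallyConstant_truncate (m : ℕ) : IsLocallyConstant (truncate m) := by
  refine (IsLocallyConstant.iff_continuous _).2 (continuous_pi fun k => ?_)
  have : Continuous fun a : ℕ => (⟨min a m, Nat.lt_succ_of_le (min_le_right _ _)⟩ : Fin (m + 1)) :=
    continuous_of_discreteTopology
  exact this.comp (continuous_apply (k : ℕ))

lemma isClopen_intactBelow (d m : ℕ) : IsClopen (intactBelow d m) := by
  have isClopen_at (k : ℕ) : IsClopen {f : ℕ → ℕ | k < m ∧ f k ≤ m} :=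
    (isClopen_discrete {a | k < m ∧ a ≤ m}).preimage (continuous_apply k)
  simpa only [intactBelow, Set.ofPred_forall, Set.mem_Iio] using
    (Set.finite_Iio d).isClopen_biInter fun k _ => isClopen_at k

theorem stmt7_general {n : ℕ} (hn : 1 ≤ n) (d : ℕ) :
    ∃ ψ : (ℕ → ℕ) → InfC,
      Continuous ψ ∧
      (∀ g : Fin n → ℕ → ℕ, (⋂ i, bset (ψ (g i)).1).Infinite) ∧
      (∀ g : Fin (n + 1) → ℕ → ℕ, Function.Injective g →
        (⋂ i, bset (ψ (g i)).1).Finite) ∧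
      (∀ g : Fin (n + 1) → ℕ → ℕ,
        (∀ i j, i ≠ j → ∃ k < d, g i k ≠ g j k) →
        (⋂ i, bset (ψ (g i)).1) = ∅) := by
  have : Nonempty (Fin n) := ⟨⟨0, hn⟩⟩
  have hcard : Fintype.card (Fin n) < Fintype.card (Fin (n + 1)) := by simp
  let A := capturingCodes (Fin n) (intactBelow d) truncate
  have infinite_iInter (g : Fin n → ℕ → ℕ) : (⋂ i, A (g i)).Infinite :=
    infinite_iInter_capturingCodes fun i => eventually_mem_intactBelow d (g i)
  have infinite_A (f : ℕ → ℕ) : (A f).Infinite := by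
    simpa only [Set.iInter_const] using infinite_iInter fun _ => f
  obtain ⟨e, ψ, he, hψ, hψA⟩ := exists_continuous_bset_eq_image infinite_A
    (isClopen_setOf_mem_capturingCodes (isClopen_intactBelow d) isLocallyConstant_truncate)
  refine ⟨ψ, hψ, ?_⟩
  simp only [hψA, ← he.injOn.image_iInter_eq]
  refine ⟨fun g => (infinite_iInter g).image he.injOn, fun g hg => ?_, fun g hg => ?_⟩
  · exact (finite_iInter_capturingCodes hcard fun a b hab =>
      eventually_truncate_ne (hg.ne hab)).image e
  · refine Set.image_eq_empty.2 (Set.eq_empty_of_forall_notMem fun p hp => ?_)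
    obtain ⟨a, b, hab, heq⟩ := exists_ne_approx_eq_of_mem_iInter_capturingCodes hcard hp
    obtain ⟨k, hk, hne⟩ := hg a b hab
    have active := Set.mem_iInter.1 hp
    exact hne (eq_of_truncate_eq_of_mem_intactBelow heq (active a).1 (active b).1 hk)

/-- For every `n ≥ 1` there is a continuous `ψ_n : [T_n] → [ω]^ω` such that:
(i) any `n` values have infinite intersection, (ii) any `n+1` distinct values
have finite intersection, and (iii) any `n+1` values coming from branches with
pairwise distinct restrictions to `{0, …, n−1}` have empty intersection. -/
theorem stmt7 :
    ∀ n : ℕ, 1 ≤ n →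
    ∃ ψ : TreeSpace n → InfC,
      Continuous ψ ∧
      (∀ g : Fin n → TreeSpace n, (⋂ i, bset (ψ (g i)).1).Infinite) ∧
      (∀ g : Fin (n + 1) → TreeSpace n, Function.Injective g →
        (⋂ i, bset (ψ (g i)).1).Finite) ∧
      (∀ g : Fin (n + 1) → TreeSpace n,
        (∀ i j, i ≠ j → ∃ k < n, (g i).1 k ≠ (g j).1 k) →
        (⋂ i, bset (ψ (g i)).1) = ∅) := by
  intro n hn
  obtain ⟨ψ, hψ, hinf, hfin, hempty⟩ := stmt7_general hn n
  exact ⟨ψ ∘ Subtype.val, hψ.comp continuous_subtype_val, fun g => hinf _,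
    fun g hg => hfin _ (Subtype.val_injective.comp hg), fun g hg => hempty _ hg⟩
end

section
/- There do not exist Borel maps φ : ℕ^ℕ → IC and ψ : IC → ℕ^ℕ such that for every f ∈ ℕ^ℕ and every A ∈ IC, if φ(f) does not split A (i.e., A ∩ φ(f) is finite or A ∖ φ(f) is finite) then f ≤* ψ(A). (I.e., there is no Borel Tukey morphism from the independence number 𝔦, nor from the unsplitting number 𝔯, to the dominating number 𝔡.) -/
open Filter

/-- `IC`: the infinite/co-infinite subsets of ℕ, regarded as a subspace of the
Cantor space via characteristic functions. -/
abbrev ICC := {x : ℕ → Bool // (bset x).Infinite ∧ ((bset x)ᶜ : Set ℕ).Infinite}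

/-- `B` splits `A`: both `A ∩ B` and `A ∖ B` are infinite. -/
def SplitsSet (B A : Set ℕ) : Prop := (A ∩ B).Infinite ∧ (A \ B).Infinite

/-!
A Borel map `φ` is continuous on a dense `Gδ` set `G`. Fix a nonprincipal ultrafilter `𝒰` on `ℕ`
and, for every `t ∈ ℕ^{<ℕ}`, a point `x t ∈ G` extending `t`. Every node `s` then has a limit
set, the `𝒰`-limit of the sets `φ (x (s⌢n))` as `n → ∞`, and either this set or its complement
belongs to `𝒰`. One of the two alternatives occurs densely above some node; say the first.

Above a node `s`, membership in `φ f` of finitely many elements of the limit set of `s` is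
forced, for `f ∈ G`, by passing through `s⌢n` for a suitable arbitrarily large `n` and then
extending further. A diagonal pseudo-intersection of limit sets yields an infinite set `A` for
which such extensions can be iterated while `A` stays inside the limit set of the current node.
Since the value `n` is arbitrarily large at each step, the branches `f` with `A ⊆ φ f` built in
this way are not dominated by any function.
-/

open Set TopologicalSpace
open scoped Topology

theorem exists_mem_residual_continuousOn {X Y : Type*} [TopologicalSpace X] [TopologicalSpace Y]
    [SecondCountableTopology Y] {p : X → Y}
    (hp : ∀ V, IsOpen V → BaireMeasurableSet (p ⁻¹' V)) :
    ∃ G ∈ residual X, ContinuousOn p G := by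
  have h_open : ∀ V : countableBasis Y, ∃ U : Set X, IsOpen U ∧ p ⁻¹' V =ᵇ U := fun V ↦
    BaireMeasurableSet.residualEq_isOpen (hp V (isOpen_of_mem_countableBasis V.2))
  choose U hU hpU using h_open
  refine ⟨{f | ∀ V : countableBasis Y, f ∈ p ⁻¹' V ↔ f ∈ U V},
    eventually_countable_forall.2 fun V ↦ (hpU V).mem_iff, ?_⟩
  exact (isBasis_countableBasis Y).continuousOn_iff.2 fun V hV ↦
    ⟨U ⟨V, hV⟩, hU _, Set.ext fun f ↦ and_congr_left fun hf ↦ hf ⟨V, hV⟩⟩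

theorem exists_infinite_subset_forall_sdiff_subset {ι : Type*} [Countable ι] {𝒰 : Filter ℕ}
    [𝒰.NeBot] (h𝒰 : 𝒰 ≤ atTop) {B : Set ℕ} (hB : B ∈ 𝒰) {W : ι → Finset ℕ → Set ℕ}
    (hW : ∀ i F, W i F ∈ 𝒰) :
    ∃ A ⊆ B, A.Infinite ∧
      ∀ i m, ∃ F : Finset ℕ, A ∩ Iic m ⊆ F ∧ ↑F ⊆ A ∧ A \ F ⊆ W i F := by
  classical
  have := Encodable.ofCountable ι
  let r (a b : ℕ) : Prop :=
    a < b ∧ ∀ i ∈ {i : ι | Encodable.encode i ≤ a}, ∀ F ∈ (Finset.Iic a).powerset, b ∈ W i F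
  have h_finite (a : ℕ) : {i : ι | Encodable.encode i ≤ a}.Finite :=
    (finite_Iic a).preimage Encodable.encode_injective.injOn
  have h_next (a : ℕ) : ∀ᶠ b in 𝒰, r a b :=
    have h_gt : ∀ᶠ b in 𝒰, a < b := h𝒰 (eventually_gt_atTop a)
    h_gt.and <| (eventually_all_finite (h_finite a)).2 fun i _ ↦
      (eventually_all_finset _).2 fun F _ ↦ hW i F
  obtain ⟨a, haB, ha⟩ := exists_seq_of_forall_finset_exists (· ∈ B) r fun s _ ↦
    (Filter.Eventually.and hB ((eventually_all_finset s).2 fun c _ ↦ h_next c)).exists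
  have ha_mono : StrictMono a := fun k l hkl ↦ (ha k l hkl).1
  refine ⟨range a, range_subset_iff.2 haB, infinite_range_of_injective ha_mono.injective,
    fun i m ↦ ?_⟩
  let k := max m (Encodable.encode i)
  have hk : k ≤ a k := ha_mono.id_le k
  refine ⟨(Finset.range (k + 1)).image a, ?_, by simp, ?_⟩
  · rintro _ ⟨⟨l, rfl⟩, hl⟩
    have : l ≤ m := (ha_mono.id_le l).trans hl
    exact Finset.mem_coe.2 (Finset.mem_image_of_mem a (by grind))
  · rintro _ ⟨⟨l, rfl⟩, hl⟩
    have hkl : k < l := by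
      by_contra! hlk
      exact hl (Finset.mem_coe.2 (Finset.mem_image_of_mem a (by grind)))
    refine (ha k l hkl).2 i ((le_max_right _ _).trans hk) _ (Finset.mem_powerset.2 ?_)
    exact Finset.image_subset_iff.2 fun j hj ↦
      Finset.mem_Iic.2 (ha_mono.monotone (Finset.mem_range_succ_iff.1 hj))

section Cylinder

variable {α : Type*} {s t : List α} {f : ℕ → α} {n : α}

/-- The basic open set of the sequences passing through the node `s` of the tree `α^{<ℕ}`. As in
`PiNat.res`, nodes list their entries backwards, so that the children of `s` are the `a :: s` and
`t` extends `s` when `s <:+ t`. -/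
def nodeCylinder (s : List α) : Set (ℕ → α) := {f | PiNat.res f s.length = s}

theorem mem_nodeCylinder_cons :
    f ∈ nodeCylinder (n :: s) ↔ f s.length = n ∧ f ∈ nodeCylinder s := by
  simp [nodeCylinder]

theorem nodeCylinder_anti (h : s <:+ t) : nodeCylinder t ⊆ nodeCylinder s := by
  obtain ⟨u, rfl⟩ := h
  induction u with
  | nil => exact Subset.rfl
  | cons a u ih => exact fun f hf ↦ ih (mem_nodeCylinder_cons.1 hf).2

theorem nodeCylinder_eq_cylinder (hf : f ∈ nodeCylinder s) :
    nodeCylinder s = PiNat.cylinder f s.length := by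
  rw [PiNat.cylinder_eq_res, show PiNat.res f s.length = s from hf, nodeCylinder]

theorem nodeCylinder_nonempty [Nonempty α] (s : List α) : (nodeCylinder s).Nonempty := by
  induction s with
  | nil => exact ⟨Classical.arbitrary _, rfl⟩
  | cons n s ih =>
    obtain ⟨f, hf⟩ := ih
    refine ⟨Function.update f s.length n, mem_nodeCylinder_cons.2 ⟨by simp, ?_⟩⟩
    rw [nodeCylinder_eq_cylinder hf]
    exact PiNat.update_mem_cylinder f s.length n

theorem suffix_res (hf : f ∈ nodeCylinder s) {m : ℕ} (hm : s.length ≤ m) :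
    s <:+ PiNat.res f m := by
  induction m, hm using Nat.le_induction with
  | base => rw [show PiNat.res f s.length = s from hf]
  | succ m _ ih => exact ih.trans (List.suffix_cons _ _)

theorem exists_forall_mem_nodeCylinder [Nonempty α] {s : ℕ → List α}
    (hs : ∀ j, ∃ a, a :: s j <:+ s (j + 1)) : ∃ f, ∀ j, f ∈ nodeCylinder (s j) := by
  have h_anti : Antitone fun j ↦ nodeCylinder (s j) := antitone_nat_of_succ_le fun j ↦
    let ⟨_, ha⟩ := hs j
    nodeCylinder_anti ((List.suffix_cons _ _).trans ha)
  have h_length : StrictMono fun j ↦ (s j).length := strictMono_nat_of_lt_succ fun j ↦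
    let ⟨_, ha⟩ := hs j
    ha.length_le
  choose y hy using fun j ↦ nodeCylinder_nonempty (s j)
  have h_agree {i j k : ℕ} (hjk : j ≤ k) (hi : i < (s j).length) : y k i = y j i := by
    have hk : y k ∈ nodeCylinder (s j) := h_anti hjk (hy k)
    rw [nodeCylinder_eq_cylinder (hy j)] at hk
    exact hk i hi
  refine ⟨fun i ↦ y (i + 1) i, fun j ↦ ?_⟩
  rw [nodeCylinder_eq_cylinder (hy j), PiNat.mem_cylinder_iff]
  intro i hi
  have hi' : i < (s (i + 1)).length := h_length.id_le (i + 1)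
  exact (h_agree (le_max_left (i + 1) j) hi').symm.trans (h_agree (le_max_right (i + 1) j) hi)

variable [TopologicalSpace α] [DiscreteTopology α]

theorem isOpen_nodeCylinder (s : List α) : IsOpen (nodeCylinder s) := by
  refine isOpen_iff_mem_nhds.2 fun f hf ↦ ?_
  rw [nodeCylinder_eq_cylinder hf]
  exact (PiNat.isOpen_cylinder _ f s.length).mem_nhds (PiNat.self_mem_cylinder f s.length)

theorem exists_suffix_nodeCylinder_subset {O : Set (ℕ → α)} (hO : IsOpen O) (hfO : f ∈ O)
    (hfs : f ∈ nodeCylinder s) : ∃ t, s <:+ t ∧ nodeCylinder t ⊆ O := by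
  obtain ⟨_, ⟨y, m, rfl⟩, hfy, hyO⟩ :=
    (PiNat.isTopologicalBasis_cylinders fun _ : ℕ ↦ α).exists_subset_of_mem_open hfO hO
  rw [← PiNat.mem_cylinder_iff_eq.1 hfy] at hyO
  refine ⟨PiNat.res f (max s.length m), suffix_res hfs (le_max_left _ _), ?_⟩
  rw [nodeCylinder, PiNat.res_length, ← PiNat.cylinder_eq_res]
  exact (PiNat.cylinder_anti f (le_max_right _ _)).trans hyO

end Cylinder

section Fusion

/-- The limit along `𝒰` of the sets `Q (x (n :: s))`, where `x` selects a point above each node. -/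
def limitSet (𝒰 : Filter ℕ) (Q : (ℕ → ℕ) → Set ℕ) (x : List ℕ → ℕ → ℕ) (s : List ℕ) : Set ℕ :=
  {i | ∀ᶠ n in 𝒰, i ∈ Q (x (n :: s))}

/-- The forcing relation: every `f ∈ G` passing through the node `t` satisfies `F ⊆ Q f`. -/
def Forces (G : Set (ℕ → ℕ)) (Q : (ℕ → ℕ) → Set ℕ) (t : List ℕ) (F : Set ℕ) : Prop :=
  ∀ f ∈ nodeCylinder t ∩ G, F ⊆ Q f

/-- One step of the fusion argument: `t` extends a child of `s` of index larger than `v`, forces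
`F ⊆ Q f`, and lies inside the `k`-th of the open sets `D` whose intersection is the domain of
the forcing relation. -/
def IsFusionStep (D : ℕ → Set (ℕ → ℕ)) (Q : (ℕ → ℕ) → Set ℕ) (v k : ℕ) (F : Set ℕ)
    (s t : List ℕ) : Prop :=
  (∃ n > v, n :: s <:+ t) ∧ nodeCylinder t ⊆ D k ∧ Forces (⋂ j, D j) Q t F

variable {G : Set (ℕ → ℕ)} {D : ℕ → Set (ℕ → ℕ)} {Q : (ℕ → ℕ) → Set ℕ} {𝒰 : Filter ℕ}
  {x : List ℕ → ℕ → ℕ} {A F : Set ℕ} {s₀ s t u : List ℕ} {k v : ℕ}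

theorem Forces.mono (h : Forces G Q t F) (htu : t <:+ u) : Forces G Q u F :=
  fun f hf ↦ h f ⟨nodeCylinder_anti htu hf.1, hf.2⟩

theorem Forces.subset_limitSet (hx : ∀ t, x t ∈ nodeCylinder t ∩ G) (h : Forces G Q t F) :
    F ⊆ limitSet 𝒰 Q x t := fun _ hi ↦ .of_forall fun n ↦
  h.mono (List.suffix_cons n t) (x (n :: t)) (hx _) hi

theorem exists_suffix_forces [𝒰.NeBot] (h𝒰 : 𝒰 ≤ atTop)
    (hQ : ∀ f ∈ G, ∀ i ∈ Q f, ∀ᶠ g in 𝓝[G] f, i ∈ Q g) (hx : ∀ t, x t ∈ nodeCylinder t ∩ G)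
    {O : Set (ℕ → ℕ)} (hO : IsOpen O) (hGO : G ⊆ O) (hF : F.Finite)
    (hFs : F ⊆ limitSet 𝒰 Q x s) (v : ℕ) :
    ∃ t, (∃ n > v, n :: s <:+ t) ∧ nodeCylinder t ⊆ O ∧ Forces G Q t F := by
  have h_gt : ∀ᶠ n in 𝒰, n > v := h𝒰 (eventually_gt_atTop v)
  obtain ⟨n, hnF, hnv⟩ := (((eventually_all_finite hF).2 hFs).and h_gt).exists
  obtain ⟨hxn, hxG⟩ := hx (n :: s)
  have h_near : ∀ᶠ g in 𝓝[G] x (n :: s), ∀ i ∈ F, i ∈ Q g :=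
    (eventually_all_finite hF).2 fun i hi ↦ hQ _ hxG i (hnF i hi)
  obtain ⟨V, hV, hxV, hVQ⟩ := mem_nhdsWithin.1 h_near
  obtain ⟨t, hst, htVO⟩ :=
    exists_suffix_nodeCylinder_subset (hV.inter hO) ⟨hxV, hGO hxG⟩ hxn
  exact ⟨t, ⟨n, hnv, hst⟩, fun f hf ↦ (htVO hf).2, fun f hf ↦ hVQ ⟨(htVO hf.1).1, hf.2⟩⟩

theorem exists_isFusionStep [𝒰.NeBot] (h𝒰 : 𝒰 ≤ atTop) (hD : ∀ k, IsOpen (D k))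
    (hQ : ∀ f ∈ ⋂ j, D j, ∀ i ∈ Q f, ∀ᶠ g in 𝓝[⋂ j, D j] f, i ∈ Q g)
    (hx : ∀ t, x t ∈ nodeCylinder t ∩ ⋂ j, D j)
    (hs₀ : ∀ s, s₀ <:+ s → ∃ t, s <:+ t ∧ limitSet 𝒰 Q x t ∈ 𝒰) (hF : F.Finite)
    (hs : s₀ <:+ s) (hFs : F ⊆ limitSet 𝒰 Q x s) (v k : ℕ) :
    ∃ t, s₀ <:+ t ∧ limitSet 𝒰 Q x t ∈ 𝒰 ∧ IsFusionStep D Q v k F s t := by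
  obtain ⟨t, ⟨n, hnv, hst⟩, htD, htF⟩ :=
    exists_suffix_forces h𝒰 hQ hx (hD k) (iInter_subset D k) hF hFs v
  have hs₀t : s₀ <:+ t := hs.trans ((List.suffix_cons n s).trans hst)
  obtain ⟨u, htu, hu⟩ := hs₀ t hs₀t
  exact ⟨u, hs₀t.trans htu, hu, ⟨n, hnv, hst.trans htu⟩, (nodeCylinder_anti htu).trans htD,
    htF.mono htu⟩

theorem exists_infinite_fusion [𝒰.NeBot] (h𝒰 : 𝒰 ≤ atTop) (hD : ∀ k, IsOpen (D k))
    (hQ : ∀ f ∈ ⋂ j, D j, ∀ i ∈ Q f, ∀ᶠ g in 𝓝[⋂ j, D j] f, i ∈ Q g)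
    (hx : ∀ t, x t ∈ nodeCylinder t ∩ ⋂ j, D j)
    (hs₀ : ∀ s, s₀ <:+ s → ∃ t, s <:+ t ∧ limitSet 𝒰 Q x t ∈ 𝒰) :
    ∃ A : Set ℕ, A.Infinite ∧ ∃ N : Set (List ℕ), N.Nonempty ∧
      ∀ s ∈ N, ∀ v k, ∃ t ∈ N, IsFusionStep D Q v k (A ∩ Iic k) s t := by
  have h_step (i : List ℕ × ℕ × ℕ) (F : Finset ℕ) : ∃ W ∈ 𝒰,
      s₀ <:+ i.1 → ↑F ⊆ limitSet 𝒰 Q x i.1 → ∃ t, s₀ <:+ t ∧ W ⊆ limitSet 𝒰 Q x t ∧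
        IsFusionStep D Q i.2.1 i.2.2 F i.1 t := by
    by_cases h : s₀ <:+ i.1 ∧ ↑F ⊆ limitSet 𝒰 Q x i.1
    · obtain ⟨t, hs₀t, ht, hit⟩ :=
        exists_isFusionStep h𝒰 hD hQ hx hs₀ F.finite_toSet h.1 h.2 i.2.1 i.2.2
      exact ⟨_, ht, fun _ _ ↦ ⟨t, hs₀t, Subset.rfl, hit⟩⟩
    · exact ⟨univ, Filter.univ_mem, fun hs hF ↦ (h ⟨hs, hF⟩).elim⟩
  choose W hW h_step using h_step
  obtain ⟨t₀, hs₀t₀, ht₀⟩ := hs₀ s₀ List.suffix_rfl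
  obtain ⟨A, hAt₀, hA, hAW⟩ := exists_infinite_subset_forall_sdiff_subset h𝒰 ht₀ hW
  refine ⟨A, hA, {s | s₀ <:+ s ∧ A ⊆ limitSet 𝒰 Q x s}, ⟨t₀, hs₀t₀, hAt₀⟩, ?_⟩
  rintro s ⟨hs, hAs⟩ v k
  obtain ⟨F, hkF, hFA, hAF⟩ := hAW (s, v, k) k
  obtain ⟨t, hs₀t, hWt, hst, htD, htF⟩ := h_step (s, v, k) F hs (hFA.trans hAs)
  have hAt : A ⊆ limitSet 𝒰 Q x t :=
    (sdiff_subset_iff.1 (hAF.trans hWt)).trans <|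
      union_subset (htF.subset_limitSet hx) Subset.rfl
  exact ⟨t, ⟨hs₀t, hAt⟩, hst, htD, fun f hf ↦ hkF.trans (htF f hf)⟩

theorem exists_frequently_lt_of_isFusionStep {N : Set (List ℕ)} (hN : N.Nonempty)
    (h_step : ∀ s ∈ N, ∀ v k, ∃ t ∈ N, IsFusionStep D Q v k (A ∩ Iic k) s t) (g : ℕ → ℕ) :
    ∃ f, A ⊆ Q f ∧ ∃ᶠ n in atTop, g n < f n := by
  obtain ⟨s₀, hs₀⟩ := hN
  choose next h_mem h_next using h_step
  let s (j : ℕ) : N :=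
    j.rec ⟨s₀, hs₀⟩ fun k s ↦ ⟨next s s.2 (g s.1.length) k, h_mem s s.2 (g s.1.length) k⟩
  have hs (j : ℕ) : IsFusionStep D Q (g (s j).1.length) j (A ∩ Iic j) (s j).1 (s (j + 1)).1 :=
    h_next (s j).1 (s j).2 (g (s j).1.length) j
  choose n hn h_suffix using fun j ↦ (hs j).1
  obtain ⟨f, hf⟩ := exists_forall_mem_nodeCylinder fun j ↦ ⟨n j, h_suffix j⟩
  have hfD : f ∈ ⋂ j, D j := mem_iInter.2 fun j ↦ (hs j).2.1 (hf (j + 1))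
  have h_length : StrictMono fun j ↦ (s j).1.length :=
    strictMono_nat_of_lt_succ fun j ↦ (h_suffix j).length_le
  refine ⟨f, fun i hi ↦ (hs i).2.2 f ⟨hf (i + 1), hfD⟩ ⟨hi, self_mem_Iic⟩, ?_⟩
  refine frequently_atTop.2 fun j ↦ ⟨(s j).1.length, h_length.id_le j, ?_⟩
  have hfn : f (s j).1.length = n j :=
    (mem_nodeCylinder_cons.1 (nodeCylinder_anti (h_suffix j) (hf (j + 1)))).1
  exact hfn ▸ hn j

theorem exists_infinite_forall_exists_subset_and_lt [𝒰.NeBot] (h𝒰 : 𝒰 ≤ atTop)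
    (hD : ∀ k, IsOpen (D k))
    (hQ : ∀ f ∈ ⋂ j, D j, ∀ i ∈ Q f, ∀ᶠ g in 𝓝[⋂ j, D j] f, i ∈ Q g)
    (hx : ∀ t, x t ∈ nodeCylinder t ∩ ⋂ j, D j)
    (hs₀ : ∀ s, s₀ <:+ s → ∃ t, s <:+ t ∧ limitSet 𝒰 Q x t ∈ 𝒰) :
    ∃ A : Set ℕ, A.Infinite ∧ ∀ g : ℕ → ℕ, ∃ f, A ⊆ Q f ∧ ∃ᶠ n in atTop, g n < f n := by
  obtain ⟨A, hA, N, hN, h_step⟩ := exists_infinite_fusion h𝒰 hD hQ hx hs₀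
  exact ⟨A, hA, exists_frequently_lt_of_isFusionStep hN h_step⟩

end Fusion

theorem limitSet_compl {𝒰 : Ultrafilter ℕ} {Q : (ℕ → ℕ) → Set ℕ} {x : List ℕ → ℕ → ℕ}
    {s : List ℕ} : limitSet 𝒰 (fun f ↦ (Q f)ᶜ) x s = (limitSet 𝒰 Q x s)ᶜ :=
  ext fun _ ↦ Ultrafilter.eventually_not

theorem exists_infinite_forall_exists_subset_or_subset_compl {p : (ℕ → ℕ) → ℕ → Bool}
    (hp : ∀ V, IsOpen V → BaireMeasurableSet (p ⁻¹' V)) :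
    ∃ A : Set ℕ, A.Infinite ∧ ∀ g : ℕ → ℕ, ∃ f,
      (A ⊆ bset (p f) ∨ A ⊆ (bset (p f))ᶜ) ∧ ∃ᶠ n in atTop, g n < f n := by
  obtain ⟨H, hH, hpH⟩ := exists_mem_residual_continuousOn hp
  obtain ⟨G, hGH, hG, hG_dense⟩ := mem_residual.1 hH
  obtain ⟨D, hD, rfl⟩ := hG.eq_iInter_nat
  have h_near (f) (hf : f ∈ ⋂ j, D j) (i : ℕ) : ∀ᶠ g in 𝓝[⋂ j, D j] f, p g i = p f i :=
    (continuousOn_pi.1 (hpH.mono hGH) i f hf).eventually_mem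
      ((isOpen_discrete {p f i}).mem_nhds rfl)
  choose x hx using fun t : List ℕ ↦
    hG_dense.inter_open_nonempty _ (isOpen_nodeCylinder t) (nodeCylinder_nonempty t)
  have h𝒰 : (hyperfilter ℕ : Filter ℕ) ≤ atTop := Nat.cofinite_eq_atTop ▸ hyperfilter_le_cofinite
  by_cases h_dense : ∃ s₀, ∀ s, s₀ <:+ s →
      ∃ t, s <:+ t ∧ limitSet (hyperfilter ℕ) (fun f ↦ bset (p f)) x t ∈ hyperfilter ℕ
  · obtain ⟨s₀, hs₀⟩ := h_dense
    obtain ⟨A, hA, hAg⟩ := exists_infinite_forall_exists_subset_and_lt h𝒰 hD (fun f hf i hi ↦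
      (h_near f hf i).mono fun g hg ↦ hg.trans hi) hx hs₀
    exact ⟨A, hA, fun g ↦ let ⟨f, hAf, hgf⟩ := hAg g; ⟨f, .inl hAf, hgf⟩⟩
  · push Not at h_dense
    obtain ⟨A, hA, hAg⟩ := exists_infinite_forall_exists_subset_and_lt (Q := fun f ↦ (bset (p f))ᶜ)
      (s₀ := []) h𝒰 hD (fun f hf i hi ↦ (h_near f hf i).mono fun g hg ↦ (hi <| hg.symm.trans ·))
      hx fun s _ ↦ by
        obtain ⟨t, hst, ht⟩ := h_dense s
        exact ⟨t, hst, limitSet_compl ▸ Ultrafilter.compl_mem_iff_notMem.2 (ht t List.suffix_rfl)⟩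
    exact ⟨A, hA, fun g ↦ let ⟨f, hAf, hgf⟩ := hAg g; ⟨f, .inr hAf, hgf⟩⟩

theorem not_splitsSet_of_subset {A B : Set ℕ} (h : A ⊆ B ∨ A ⊆ Bᶜ) : ¬ SplitsSet B A := by
  rintro ⟨h_inter, h_diff⟩
  rcases h with h | h
  · exact h_diff.nonempty.ne_empty (sdiff_eq_empty.2 h)
  · exact h_inter.nonempty.ne_empty (subset_compl_iff_disjoint_right.1 h).inter_eq

theorem bset_surjective : Function.Surjective bset := by
  classical
  exact fun A ↦ ⟨fun n ↦ decide (n ∈ A), ext fun n ↦ decide_eq_true_iff⟩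

theorem stmt10_general {φ : (ℕ → ℕ) → ICC}
    (hφ : ∀ V, IsOpen V → BaireMeasurableSet (φ ⁻¹' V)) :
    ∃ A : ICC, ∀ g : ℕ → ℕ, ∃ f,
      ¬ SplitsSet (bset (φ f).1) (bset A.1) ∧ ∃ᶠ n in cofinite, g n < f n := by
  obtain ⟨A, hA, hAg⟩ := exists_infinite_forall_exists_subset_or_subset_compl
    (p := fun f ↦ (φ f).1) fun V hV ↦ hφ _ (hV.preimage continuous_subtype_val)
  have hA_compl : Aᶜ.Infinite := by
    obtain ⟨f, hAf | hAf, -⟩ := hAg 0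
    · exact (φ f).2.2.mono (compl_subset_compl.2 hAf)
    · exact (φ f).2.1.mono (subset_compl_comm.1 hAf)
  obtain ⟨a, rfl⟩ := bset_surjective A
  refine ⟨⟨a, hA, hA_compl⟩, fun g ↦ ?_⟩
  obtain ⟨f, hAf, hgf⟩ := hAg g
  exact ⟨f, not_splitsSet_of_subset hAf, Nat.cofinite_eq_atTop ▸ hgf⟩

/-- There are no Borel maps `φ : ℕ^ℕ → IC` and `ψ : IC → ℕ^ℕ` such that
whenever `φ(f)` does not split `A`, we have `f ≤* ψ(A)`.
(No Borel Tukey morphism from 𝔦, nor from 𝔯, to 𝔡.) -/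
theorem stmt10 :
    ¬ ∃ (φ : (ℕ → ℕ) → ICC) (ψ : ICC → (ℕ → ℕ)),
      Measurable φ ∧ Measurable ψ ∧
      ∀ (f : ℕ → ℕ) (A : ICC),
        ¬ SplitsSet (bset (φ f).1) (bset A.1) →
        ∀ᶠ n in cofinite, f n ≤ ψ A n := by
  rintro ⟨φ, ψ, hφ, -, h_unsplit⟩
  obtain ⟨A, hA⟩ := stmt10_general fun V hV ↦ (hφ hV.measurableSet).baireMeasurableSet
  obtain ⟨f, hfA, h_lt⟩ := hA (ψ A)
  exact h_lt ((h_unsplit f A hfA).mono fun n hn ↦ hn.not_gt)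
end

section
/- Let 1 ≤ m ≤ n and 1 ≤ m' ≤ n' with m < m'. Then there do not exist Borel maps φ : ([ω]^ω)^{n'} → ([ω]^ω)^n and ψ : 2^ℕ → 2^ℕ such that for every tuple (B_1, …, B_{n'}) of infinite subsets of ℕ and every c ∈ 2^ℕ: if c splits at least m of the n components of φ(B_1, …, B_{n'}), then ψ(c) splits at least m' of B_1, …, B_{n'}. (I.e., there is no Borel Tukey morphism from 𝔰_{n,m} to 𝔰_{n',m'} when m < m'.) -/
/-- `c ∈ 2^ℕ` splits the infinite set `A ⊆ ℕ`: both `{k ∈ A | c k = false}`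
and `{k ∈ A | c k = true}` are infinite. -/
def Splits (c : ℕ → Bool) (A : Set ℕ) : Prop :=
  {k ∈ A | c k = false}.Infinite ∧ {k ∈ A | c k = true}.Infinite

/-!
By the Baire property of `ψ` there are open sets `U k` such that, for generic `c`, the set coded by
`ψ c` is `{k | c ∈ U k}`. The sets `B i` depend only on the `U k`.

If some nonempty open `V` misses infinitely many of the `U k`, let every `B i` consist of these `k`:
for generic `c ∈ V` the set coded by `ψ c` misses all of them, while `c` splits any given countable
family.

Otherwise all but finitely many `U k` meet every cylinder of a given length, and a fusion yields
indices `k 0 < k 1 < ⋯` and an interval partition of `ℕ` such that `c` can be steered into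
`U (k n)` using only its values on the `n`-th interval, given its values before. Spread the indices
`k n` over the sets `B i`, each `B i` receiving infinitely many, and colour the `n`-th interval by
the `i` with `k n ∈ B i`. Only `m` of the sets given by `φ` have to be split; call them `A j`. Each
`A j` has infinitely many elements in the intervals of a single colour `f j`. Let `c` split the
`A j` on the intervals of the colours `f j` and be steered on all the others: then `ψ c` is
constant on every `B i` with `i` not of the form `f j`, that is, on all but at most `m` of the
`B i`.
-/

open Filter Function PiNat Set Topology

section Combinatorics

variable {ι : Type*}

theorem exists_nat_forall_infinite_fiber [Countable ι] [Nonempty ι] :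
    ∃ r : ℕ → ι, ∀ i, (r ⁻¹' {i}).Infinite := by
  obtain ⟨e, he⟩ := exists_surjective_nat ι
  refine ⟨fun x => e x.unpair.1, fun i => ?_⟩
  obtain ⟨a, rfl⟩ := he i
  exact infinite_of_injective_forall_mem (f := Nat.pair a)
    (fun x y hxy => (Nat.pair_eq_pair.1 hxy).2) (by simp)

theorem exists_infinite_inter_fiber {β : Type*} [Finite ι] {A : Set β} (hA : A.Infinite)
    (g : β → ι) : ∃ i, (A ∩ g ⁻¹' {i}).Infinite := by
  by_contra! h
  refine hA ((finite_iUnion h).subset fun x hx => ?_)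
  exact mem_iUnion.2 ⟨g x, hx, rfl⟩

theorem exists_block_index {l : ℕ → ℕ} (hl : StrictMono l) (hl0 : l 0 = 0) :
    ∃ b : ℕ → ℕ, ∀ i n, b i = n ↔ i ∈ Ico (l n) (l (n + 1)) := by
  have hcover (i : ℕ) : ∃ n, i ∈ Ico (l n) (l (n + 1)) := by
    have hmem : i ∈ ⋃ n, Ico (l n) (l (Order.succ n)) := by
      rw [iUnion_Ico_map_succ_eq_Ici (fun n => hl.monotone bot_le)
        hl.not_bddAbove_range_of_isSuccArchimedean]
      simp [hl0]
    simpa using hmem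
  choose b hb using hcover
  refine ⟨b, fun i n => ⟨fun h => h ▸ hb i, fun hn => ?_⟩⟩
  by_contra hne
  exact (hl.monotone.pairwise_disjoint_on_Ico_succ hne).notMem_of_mem_left (hb i) hn

end Combinatorics

section Recursion

variable {α : Type*}

theorem exists_isFixedPt_of_forall_mem_cylinder [Nonempty α] (F : (ℕ → α) → ℕ → α)
    (hF : ∀ n x, ∀ y ∈ cylinder x n, F y n = F x n) : ∃ c, IsFixedPt F c := by
  classical
  obtain ⟨a⟩ := ‹Nonempty α›
  let step (n : ℕ) (ih : ∀ i < n, α) : α := F (fun i => if h : i < n then ih i h else a) n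
  let c : ℕ → α := Nat.lt_wfRel.wf.fix step
  refine ⟨c, funext fun n => ?_⟩
  have hc : c n = step n fun i _ => c i := Nat.lt_wfRel.wf.fix_eq step n
  rw [hc]
  exact hF n _ c fun i hi => by simp [hi]

-- `q n` prescribes the block `[l n, l (n + 1))` in terms of the values before it; `c` is the fixed
-- point of playing `q` on the blocks in `S` and `d` on the others.
theorem exists_following_strategy_on_blocks {l : ℕ → ℕ} (hl : StrictMono l) (hl0 : l 0 = 0)
    {q : ℕ → (ℕ → α) → ℕ → α} (hq : ∀ n p, q n p ∈ cylinder p (l n)) :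
    ∃ b : ℕ → ℕ, ∀ (S : Set ℕ) (d : ℕ → α), ∃ c : ℕ → α,
      (∀ n ∈ S, ∃ p, c ∈ cylinder (q n p) (l (n + 1))) ∧ ∀ i, b i ∉ S → c i = d i := by
  classical
  obtain ⟨b, hb⟩ := exists_block_index hl hl0
  refine ⟨b, fun S d => ?_⟩
  let past (n : ℕ) (c : ℕ → α) : ℕ → α := fun i => if i < l n then c i else d i
  let F (c : ℕ → α) (i : ℕ) : α := if b i ∈ S then q (b i) (past (b i) c) i else d i
  have hF (i : ℕ) (x : ℕ → α) : ∀ y ∈ cylinder x i, F y i = F x i := by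
    intro y hy
    have hpast : past (b i) y = past (b i) x :=
      funext fun j => ite_congr rfl (fun hj => hy j (hj.trans_le ((hb i _).1 rfl).1)) fun _ => rfl
    simp only [F, hpast]
  have : Nonempty α := ⟨d 0⟩
  obtain ⟨c, hc⟩ := exists_isFixedPt_of_forall_mem_cylinder F hF
  refine ⟨c, fun n hn => ⟨past n c, fun i hi => ?_⟩, fun i hi => ?_⟩
  · rcases lt_or_ge i (l n) with hil | hil
    · rw [hq n _ i hil]
      exact (if_pos hil).symm
    · obtain rfl : b i = n := (hb i n).2 ⟨hil, hi⟩
      exact (congrFun hc i).symm.trans (if_pos hn)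
  · exact (congrFun hc i).symm.trans (if_neg hi)

end Recursion

section Residual

variable {X : Type*} [TopologicalSpace X]

theorem exists_antitone_isOpen_dense_of_mem_residual [BaireSpace X] {G : Set X}
    (hG : G ∈ residual X) :
    ∃ D : ℕ → Set X, Antitone D ∧ (∀ n, IsOpen (D n)) ∧ (∀ n, Dense (D n)) ∧ ⋂ n, D n ⊆ G := by
  obtain ⟨T, hTG, hT, hTd⟩ := mem_residual.1 hG
  obtain ⟨V, hV, rfl⟩ := hT.eq_iInter_nat
  refine ⟨dissipate V, fun _ _ => dissipate_subset_dissipate, fun n => ?_, fun n => ?_, ?_⟩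
  · exact (finite_Iic n).isOpen_biInter fun i _ => hV i
  · exact hTd.mono (iInter_subset_dissipate n)
  · rwa [iInter_dissipate]

theorem exists_isOpen_eventually_forall_mem_iff {ι : Type*} [Countable ι] {s : ι → Set X}
    (hs : ∀ k, BaireMeasurableSet (s k)) :
    ∃ U : ι → Set X, (∀ k, IsOpen (U k)) ∧ ∀ᶠ c in residual X, ∀ k, c ∈ s k ↔ c ∈ U k := by
  choose U hU hsU using fun k => (hs k).residualEq_isOpen
  exact ⟨U, hU, eventually_countable_forall.2 fun k => (hsU k).mem_iff⟩

/-- Every nonempty open set meets all but finitely many of the sets `U k`. This is the condition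
under which points can be steered into the `U k` one after the other. -/
def AsymptoticallyDense (U : ℕ → Set X) : Prop :=
  ∀ V : Set X, IsOpen V → V.Nonempty → ∀ᶠ k in atTop, (V ∩ U k).Nonempty

theorem AsymptoticallyDense.inter_dense {U : ℕ → Set X} (hU : AsymptoticallyDense U)
    (hUo : ∀ k, IsOpen (U k)) {D : Set X} (hD : Dense D) :
    AsymptoticallyDense fun k => U k ∩ D := by
  intro V hV hVne
  filter_upwards [hU V hV hVne] with k hk
  rw [← inter_assoc]
  exact hD.inter_open_nonempty _ (hV.inter (hUo k)) hk

end Residual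

section Fusion

variable {α : Type*} [TopologicalSpace α] [DiscreteTopology α]

theorem eventually_cylinder_subset_of_isOpen {U : Set (ℕ → α)} (hU : IsOpen U) {x : ℕ → α}
    (hx : x ∈ U) : ∀ᶠ n in atTop, cylinder x n ⊆ U := by
  obtain ⟨_, ⟨y, n, rfl⟩, hxy, hyU⟩ :=
    (isTopologicalBasis_cylinders fun _ : ℕ => α).exists_subset_of_mem_open hx hU
  filter_upwards [eventually_ge_atTop n] with k hk
  rw [← mem_cylinder_iff_eq.1 hxy] at hyU
  exact (cylinder_anti x hk).trans hyU

theorem AsymptoticallyDense.exists_cylinder_subset [Finite α] {U : ℕ → Set (ℕ → α)}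
    (hU : AsymptoticallyDense U) (hUo : ∀ k, IsOpen (U k)) (l : ℕ) :
    ∃ k ≥ l, ∃ l' > k, ∀ p : ℕ → α, ∃ q ∈ cylinder p l, cylinder q l' ⊆ U k := by
  obtain ⟨t, ht⟩ := CompactSpace.elim_nhds_subcover (fun p : ℕ → α => cylinder p l) fun p =>
    (isOpen_cylinder _ p l).mem_nhds (self_mem_cylinder p l)
  obtain ⟨k, hk, hlk⟩ : ∃ k, (∀ p ∈ t, (cylinder p l ∩ U k).Nonempty) ∧ l ≤ k :=
    (((eventually_all_finset t).2 fun p _ => hU _ (isOpen_cylinder _ p l)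
      ⟨p, self_mem_cylinder p l⟩).and (eventually_ge_atTop l)).exists
  choose! q hql hqU using hk
  obtain ⟨l', hl', hkl'⟩ : ∃ l', (∀ p ∈ t, cylinder (q p) l' ⊆ U k) ∧ k < l' :=
    (((eventually_all_finset t).2 fun p hp =>
      eventually_cylinder_subset_of_isOpen (hUo k) (hqU p hp)).and (eventually_gt_atTop k)).exists
  refine ⟨k, hlk, l', hkl', fun p => ?_⟩
  obtain ⟨s, hst, hps⟩ := mem_iUnion₂.1 (ht.ge (mem_univ p))
  rw [mem_cylinder_iff_eq.1 hps]
  exact ⟨q s, hql s hst, hl' s hst⟩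

theorem AsymptoticallyDense.exists_fusion [Finite α] {U : ℕ → Set (ℕ → α)}
    (hU : AsymptoticallyDense U) (hUo : ∀ k, IsOpen (U k)) {G : Set (ℕ → α)}
    (hG : G ∈ residual (ℕ → α)) :
    ∃ k b : ℕ → ℕ, StrictMono k ∧ ∀ S : Set ℕ, S.Infinite → ∀ d : ℕ → α,
      ∃ c ∈ G, (∀ n ∈ S, c ∈ U (k n)) ∧ ∀ i, b i ∉ S → c i = d i := by
  obtain ⟨D, hDanti, hDo, hDd, hDG⟩ := exists_antitone_isOpen_dense_of_mem_residual hG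
  choose k hk next hnext q hql hqU using fun l =>
    (hU.inter_dense hUo (hDd l)).exists_cylinder_subset (fun i => (hUo i).inter (hDo l)) l
  let l (n : ℕ) : ℕ := next^[n] 0
  have hl_succ (n : ℕ) : l (n + 1) = next (l n) := iterate_succ_apply' next n 0
  have hkl (n : ℕ) : k (l n) < l (n + 1) := hl_succ n ▸ hnext (l n)
  have hl : StrictMono l := strictMono_nat_of_lt_succ fun n => (hk (l n)).trans_lt (hkl n)
  obtain ⟨b, hb⟩ := exists_following_strategy_on_blocks hl rfl (q := fun n => q (l n))
    fun n => hql (l n)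
  refine ⟨k ∘ l, b, strictMono_nat_of_lt_succ fun n => (hkl n).trans_le (hk _), fun S hS d => ?_⟩
  obtain ⟨c, hcS, hcd⟩ := hb S d
  have hcUD : ∀ n ∈ S, c ∈ U (k (l n)) ∩ D (l n) := by
    intro n hn
    obtain ⟨p, hp⟩ := hcS n hn
    exact hqU (l n) p (hl_succ n ▸ hp)
  refine ⟨c, hDG (mem_iInter.2 fun N => ?_), fun n hn => (hcUD n hn).1, hcd⟩
  obtain ⟨n, hn, hNn⟩ := hS.exists_gt N
  exact hDanti (hNn.le.trans hl.le_apply) (hcUD n hn).2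

theorem eventually_residual_infinite_setOf_eq {A : Set ℕ} (hA : A.Infinite) (a : α) :
    ∀ᶠ c in residual (ℕ → α), {k ∈ A | c k = a}.Infinite := by
  have hgt (N : ℕ) : ∀ᶠ c : ℕ → α in residual _, ∃ k ∈ {k ∈ A | c k = a}, N < k := by
    refine residual_of_dense_open ?_ (dense_iff_inter_open.2 ?_)
    · have hset : {c : ℕ → α | ∃ k ∈ {k ∈ A | c k = a}, N < k} =
          ⋃ k ∈ {k ∈ A | N < k}, eval k ⁻¹' {a} := by
        ext c
        simp [and_right_comm, and_assoc]
      rw [hset]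
      exact isOpen_biUnion fun k _ => (isOpen_discrete {a}).preimage (continuous_apply k)
    · rintro V hV ⟨x, hx⟩
      obtain ⟨l, hl⟩ := (eventually_cylinder_subset_of_isOpen hV hx).exists
      obtain ⟨k, hkA, hk⟩ := hA.exists_gt (max N l)
      have hupdate : update x k a ∈ cylinder x l :=
        cylinder_anti x (le_max_right N l |>.trans hk.le) (update_mem_cylinder x k a)
      exact ⟨update x k a, hl hupdate, k, ⟨hkA, update_self k a x⟩, (le_max_left N l).trans_lt hk⟩
  filter_upwards [eventually_countable_forall.2 hgt] with c hc
  exact infinite_of_forall_exists_gt hc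

end Fusion

section Splitting

variable {c d : ℕ → Bool} {A A' : Set ℕ}

theorem Splits.mono_of_eqOn (h : Splits d A) (hA : A ⊆ A') (hcd : EqOn c d A) : Splits c A' :=
  ⟨h.1.mono fun _ hk => ⟨hA hk.1, (hcd hk.1).trans hk.2⟩,
    h.2.mono fun _ hk => ⟨hA hk.1, (hcd hk.1).trans hk.2⟩⟩

theorem not_splits_of_forall_eq {a : Bool} (h : ∀ k ∈ A, c k = a) : ¬ Splits c A := by
  rintro ⟨hfalse, htrue⟩
  obtain ⟨i, hiA, hi⟩ := hfalse.nonempty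
  obtain ⟨j, hjA, hj⟩ := htrue.nonempty
  simp_all

theorem eventually_residual_forall_splits {κ : Type*} [Countable κ] {A : κ → Set ℕ}
    (hA : ∀ j, (A j).Infinite) : ∀ᶠ c in residual (ℕ → Bool), ∀ j, Splits c (A j) :=
  eventually_countable_forall.2 fun j =>
    (eventually_residual_infinite_setOf_eq (hA j) false).and
      (eventually_residual_infinite_setOf_eq (hA j) true)

theorem exists_bset_eq {B : Set ℕ} (hB : B.Infinite) : ∃ x : InfC, bset x.1 = B := by
  classical
  have hcode : bset (fun k => decide (k ∈ B)) = B := by simp [bset]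
  exact ⟨⟨_, hcode.symm ▸ hB⟩, hcode⟩

variable {ψ : (ℕ → Bool) → ℕ → Bool} {U : ℕ → Set (ℕ → Bool)} {ι : Type*} (κ : Type*)

theorem exists_infinite_not_splits_of_not_asymptoticallyDense [Countable κ]
    (hU : ¬ AsymptoticallyDense U)
    (hψ : ∀ᶠ c in residual (ℕ → Bool), ∀ k, ψ c k = true → c ∈ U k) :
    ∃ B : Set ℕ, B.Infinite ∧ ∀ A : κ → Set ℕ, (∀ j, (A j).Infinite) →
      ∃ c, (∀ j, Splits c (A j)) ∧ ¬ Splits (ψ c) B := by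
  obtain ⟨V, hVo, hVne, hV⟩ : ∃ V, IsOpen V ∧ V.Nonempty ∧ ∃ᶠ k in atTop, ¬ (V ∩ U k).Nonempty := by
    simpa only [AsymptoticallyDense, not_forall, exists_prop, not_eventually] using hU
  refine ⟨_, Nat.frequently_atTop_iff_infinite.1 hV, fun A hA => ?_⟩
  obtain ⟨c, hcV, hcψ, hcA⟩ := (dense_of_mem_residual
    (hψ.and (eventually_residual_forall_splits hA))).inter_open_nonempty V hVo hVne
  refine ⟨c, hcA, not_splits_of_forall_eq (a := false) fun k hk => ?_⟩
  exact Bool.eq_false_of_not_eq_true fun hkc => hk ⟨c, hcV, hcψ k hkc⟩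

theorem AsymptoticallyDense.exists_infinite_ncard_splits_le [Finite ι] [Finite κ]
    (hcard : Nat.card κ < Nat.card ι) (hU : AsymptoticallyDense U) (hUo : ∀ k, IsOpen (U k))
    (hψ : ∀ᶠ c in residual (ℕ → Bool), ∀ k, c ∈ U k → ψ c k = true) :
    ∃ B : ι → Set ℕ, (∀ i, (B i).Infinite) ∧ ∀ A : κ → Set ℕ, (∀ j, (A j).Infinite) →
      ∃ c, (∀ j, Splits c (A j)) ∧ {i | Splits (ψ c) (B i)}.ncard ≤ Nat.card κ := by
  obtain ⟨k, b, hk, hfusion⟩ := hU.exists_fusion hUo hψ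
  have : Nonempty ι := (Nat.card_pos_iff.1 (pos_of_gt hcard)).1
  obtain ⟨r, hr⟩ := exists_nat_forall_infinite_fiber (ι := ι)
  refine ⟨fun i => k '' (r ⁻¹' {i}), fun i => (hr i).image hk.injective.injOn, fun A hA => ?_⟩
  choose f hf using fun j => exists_infinite_inter_fiber (hA j) (r ∘ b)
  obtain ⟨d, hd⟩ := (dense_of_mem_residual (eventually_residual_forall_splits hf)).nonempty
  have hrange : (range f).ncard ≤ Nat.card κ := by
    simpa only [image_univ, ncard_univ] using ncard_image_le (f := f) finite_univ
  obtain ⟨i₀, hi₀⟩ : ∃ i₀, i₀ ∉ range f := by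
    by_contra! h
    rw [eq_univ_of_forall h, ncard_univ] at hrange
    exact hrange.not_gt hcard
  have hfree : (r ⁻¹' (range f)ᶜ).Infinite :=
    (hr i₀).mono (preimage_mono (singleton_subset_iff.2 hi₀))
  obtain ⟨c, hcψ, hcU, hcd⟩ := hfusion _ hfree d
  refine ⟨c, fun j => (hd j).mono_of_eqOn inter_subset_left fun x hx => ?_, ?_⟩
  · exact hcd x fun hx' => hx' ⟨j, hx.2.symm⟩
  · refine (ncard_le_ncard (fun i hi => ?_) (toFinite _)).trans hrange
    by_contra hif
    refine not_splits_of_forall_eq (a := true) ?_ hi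
    rintro _ ⟨n, rfl, rfl⟩
    exact hcψ _ (hcU n hif)

theorem exists_infinite_ncard_splits_le [Finite ι] [Finite κ]
    (hcard : Nat.card κ < Nat.card ι) (hψ : ∀ k, BaireMeasurableSet {c | ψ c k = true}) :
    ∃ B : ι → Set ℕ, (∀ i, (B i).Infinite) ∧ ∀ A : κ → Set ℕ, (∀ j, (A j).Infinite) →
      ∃ c, (∀ j, Splits c (A j)) ∧ {i | Splits (ψ c) (B i)}.ncard ≤ Nat.card κ := by
  obtain ⟨U, hUo, hψU⟩ := exists_isOpen_eventually_forall_mem_iff hψ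
  by_cases hU : AsymptoticallyDense U
  · exact hU.exists_infinite_ncard_splits_le κ hcard hUo (hψU.mono fun c hc k => (hc k).2)
  · obtain ⟨B, hB, hBA⟩ := exists_infinite_not_splits_of_not_asymptoticallyDense κ hU
      (hψU.mono fun c hc k => (hc k).1)
    refine ⟨fun _ => B, fun _ => hB, fun A hA => ?_⟩
    obtain ⟨c, hcA, hcB⟩ := hBA A hA
    exact ⟨c, hcA, by simp [hcB]⟩

end Splitting

theorem stmt15_general {ι κ : Type*} [Finite ι] [Finite κ] {m : ℕ} (hκ : m ≤ Nat.card κ)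
    (hι : m < Nat.card ι) {ψ : (ℕ → Bool) → ℕ → Bool}
    (hψ : ∀ k, BaireMeasurableSet {c | ψ c k = true}) :
    ∃ B : ι → InfC, ∀ A : κ → InfC, ∃ c,
      m ≤ {j | Splits c (bset (A j).1)}.ncard ∧ {i | Splits (ψ c) (bset (B i).1)}.ncard ≤ m := by
  obtain ⟨s, -, rfl⟩ := exists_subset_card_eq ((ncard_univ κ).symm ▸ hκ)
  obtain ⟨B, hB, hBA⟩ := exists_infinite_ncard_splits_le s (ι := ι) hι hψ
  choose B' hB' using fun i => exists_bset_eq (hB i)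
  refine ⟨B', fun A => ?_⟩
  obtain ⟨c, hcA, hcB⟩ := hBA (fun j => bset (A j).1) fun j => (A j).2
  refine ⟨c, ncard_le_ncard (fun j hj => hcA ⟨j, hj⟩) (toFinite _), ?_⟩
  simpa only [hB', Nat.card_coe_set_eq] using hcB

/-- For `1 ≤ m ≤ n`, `1 ≤ m' ≤ n'` and `m < m'`, there are no Borel maps
`φ : ([ω]^ω)^{n'} → ([ω]^ω)^n` and `ψ : 2^ℕ → 2^ℕ` such that whenever `c`
splits at least `m` components of `φ(B)`, `ψ(c)` splits at least `m'` of the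
`B_i`.  (No Borel Tukey morphism from 𝔰_{n,m} to 𝔰_{n',m'} when `m < m'`.) -/
theorem stmt15 (m n m' n' : ℕ) (hm : 1 ≤ m) (hmn : m ≤ n)
    (hm' : 1 ≤ m') (hmn' : m' ≤ n') (hlt : m < m') :
    ¬ ∃ (φ : (Fin n' → InfC) → (Fin n → InfC)) (ψ : (ℕ → Bool) → (ℕ → Bool)),
      Measurable φ ∧ Measurable ψ ∧
      ∀ (B : Fin n' → InfC) (c : ℕ → Bool),
        m ≤ {i : Fin n | Splits c (bset (φ B i).1)}.ncard →
        m' ≤ {i : Fin n' | Splits (ψ c) (bset (B i).1)}.ncard := by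
  rintro ⟨φ, ψ, -, hψ, H⟩
  obtain ⟨B, hB⟩ := stmt15_general (ι := Fin n') (κ := Fin n) (by simpa)
    (by simpa using hlt.trans_le hmn')
    fun k => ((measurable_pi_apply k).comp hψ (measurableSet_singleton true)).baireMeasurableSet
  obtain ⟨c, hcA, hcB⟩ := hB (φ B)
  exact hlt.not_ge ((H B c hcA).trans hcB)
end
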